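/- For every s ∈ ∏_{i=1}^n [ř_i + u_i, r̂_i + u_i] one has μ({y ∈ ℝⁿ : s + y ∈ ∏_{i=1}^n [a_i, b_i]}) ≥ ∏_{i=1}^n g_i(s_{i,min}); moreover the point (s_{1,min}, …, s_{n,min}) belongs to ∏_{i=1}^n [ř_i + u_i, r̂_i + u_i] and attains equality, so the infimum of the landing probability over this rectangle of positions equals ∏_{i=1}^n g_i(s_{i,min}). (This is the lower transition-probability bound of Fact 3 of the paper.) -/

import Mathlib

open MeasureTheory

theorem unimodal_abs_le (f : ℝ → ℝ) (c : ℝ)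
    (hs : ∀ t, f (c + t) = f (c - t)) (ha : AntitoneOn f (Set.Ici c))
    {x y : ℝ} (h : |x - c| ≤ |y - c|) : f y ≤ f x := by
  have key : ∀ z, f z = f (c + |z - c|) := by
    intro z
    rcases abs_cases (z - c) with ⟨h1, _⟩ | ⟨h1, _⟩
    · rw [h1]; congr 1; ring
    · rw [h1, hs]; congr 1; ring
  rw [key x, key y]
  apply ha
  · simp
  · simp
  · linarith

theorem window_mono (f : ℝ → ℝ) (c h : ℝ) (hh : 0 ≤ h) (hi : Integrable f)
    (hs : ∀ t, f (c + t) = f (c - t)) (ha : AntitoneOn f (Set.Ici c))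
    {d e : ℝ} (hd : 0 ≤ d) (hde : d ≤ e) :
    ∫ x in (c - h - e)..(c + h - e), f x ≤ ∫ x in (c - h - d)..(c + h - d), f x := by
  have ii : ∀ p q, IntervalIntegrable f volume p q := fun p q => hi.intervalIntegrable
  have e1 := intervalIntegral.integral_add_adjacent_intervals
    (ii (c - h - e) (c - h - d)) (ii (c - h - d) (c + h - d))
  have e2 := intervalIntegral.integral_add_adjacent_intervals
    (ii (c - h - e) (c + h - e)) (ii (c + h - e) (c + h - d))
  have e3 : ∫ x in (c + h - e)..(c + h - d), f (x - 2 * h)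
      = ∫ x in (c - h - e)..(c - h - d), f x := by
    rw [intervalIntegral.integral_comp_sub_right]
    congr 1 <;> ring
  have e4 : ∫ x in (c + h - e)..(c + h - d), f (x - 2 * h)
      ≤ ∫ x in (c + h - e)..(c + h - d), f x := by
    apply intervalIntegral.integral_mono_on (by linarith)
      (hi.comp_sub_right (2 * h)).intervalIntegrable (ii _ _)
    intro x hx
    apply unimodal_abs_le f c hs ha
    apply sq_le_sq.mp
    nlinarith [hx.2]
  linarith

theorem window_even (f : ℝ → ℝ) (c h d : ℝ)
    (hs : ∀ t, f (c + t) = f (c - t)) :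
    ∫ x in (c - h - d)..(c + h - d), f x = ∫ x in (c - h - -d)..(c + h - -d), f x := by
  have : ∀ x, f x = f (2 * c - x) := by
    intro x
    have := hs (x - c)
    rw [show c + (x - c) = x by ring, show c - (x - c) = 2 * c - x by ring] at this
    exact this
  rw [intervalIntegral.integral_congr (g := fun x => f (2 * c - x)) (fun x _ => this x),
    intervalIntegral.integral_comp_sub_left]
  congr 1 <;> ring

theorem window_abs (f : ℝ → ℝ) (c h : ℝ) (hh : 0 ≤ h) (hi : Integrable f)
    (hs : ∀ t, f (c + t) = f (c - t)) (ha : AntitoneOn f (Set.Ici c))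
    {d e : ℝ} (hde : |d| ≤ |e|) :
    ∫ x in (c - h - e)..(c + h - e), f x ≤ ∫ x in (c - h - d)..(c + h - d), f x := by
  have key : ∀ z, ∫ x in (c - h - z)..(c + h - z), f x
      = ∫ x in (c - h - |z|)..(c + h - |z|), f x := by
    intro z
    rcases abs_cases z with ⟨h1, _⟩ | ⟨h1, _⟩
    · rw [h1]
    · rw [h1]; exact window_even f c h z hs
  rw [key d, key e]
  exact window_mono f c h hh hi hs ha (abs_nonneg d) hde

/-- Lower transition-probability bound of Fact 3: for every position `s` in the
shifted reachable rectangle `∏ [ř_i + u_i, r̂_i + u_i]`, the probability that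
`s + w` lands in the target rectangle `∏ [a_i, b_i]` is at least
`∏ g_i (s_{i,min})`, and this bound is attained at `s_min`, which belongs to
the rectangle. -/
theorem lower_transition_bound
    (n : ℕ)
    (f : Fin n → ℝ → ℝ) (c a b rlo rhi u : Fin n → ℝ)
    (hf_nonneg : ∀ i x, 0 ≤ f i x)
    (hf_int : ∀ i, Integrable (f i))
    (hf_prob : ∀ i, ∫ x, f i x = 1)
    (hf_symm : ∀ i t, f i (c i + t) = f i (c i - t))
    (hf_mono : ∀ i, MonotoneOn (f i) (Set.Iic (c i)))
    (hf_anti : ∀ i, AntitoneOn (f i) (Set.Ici (c i)))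
    (hab : ∀ i, a i < b i) (hr : ∀ i, rlo i ≤ rhi i)
    (μ : Measure (Fin n → ℝ))
    (hμ : μ = Measure.pi fun i =>
      (volume : Measure ℝ).withDensity fun x => ENNReal.ofReal (f i x))
    (g : Fin n → ℝ → ℝ)
    (hg : ∀ i s, g i s = ∫ x in (a i)..(b i), f i (x - s))
    (sstar smax smin : Fin n → ℝ)
    (hsstar : ∀ i, sstar i = (a i + b i) / 2 - c i)
    (hsmax : ∀ i, smax i =
      if rlo i + u i ≤ sstar i ∧ sstar i ≤ rhi i + u i then sstar i
      else if rhi i + u i < sstar i then rhi i + u i else rlo i + u i)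
    (hsmin : ∀ i, smin i =
      if (rlo i + rhi i) / 2 + u i < smax i then rlo i + u i
      else rhi i + u i) :
    (∀ s : Fin n → ℝ, (∀ i, s i ∈ Set.Icc (rlo i + u i) (rhi i + u i)) →
      ENNReal.ofReal (∏ i, g i (smin i)) ≤
        μ {y | ∀ i, s i + y i ∈ Set.Icc (a i) (b i)})
    ∧ (∀ i, smin i ∈ Set.Icc (rlo i + u i) (rhi i + u i))
    ∧ μ {y | ∀ i, smin i + y i ∈ Set.Icc (a i) (b i)} =
        ENNReal.ofReal (∏ i, g i (smin i)) := by
  have hgw : ∀ i s, g i s = ∫ x in (a i - s)..(b i - s), f i x := by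
    intro i s
    rw [hg, intervalIntegral.integral_comp_sub_right]
  have hg0 : ∀ i s, 0 ≤ g i s := by
    intro i s
    rw [hg]
    exact intervalIntegral.integral_nonneg (hab i).le fun x _ => hf_nonneg i _
  have hgm : ∀ i s t, |s - sstar i| ≤ |t - sstar i| → g i t ≤ g i s := by
    intro i s t hst
    have := window_abs (f i) (c i) ((b i - a i) / 2) (by linarith [hab i]) (hf_int i)
      (hf_symm i) (hf_anti i) hst
    rw [hgw, hgw]
    have e1 : ∀ z, c i - (b i - a i) / 2 - (z - sstar i) = a i - z := by
      intro z; rw [hsstar]; ring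
    have e2 : ∀ z, c i + (b i - a i) / 2 - (z - sstar i) = b i - z := by
      intro z; rw [hsstar]; ring
    simpa only [e1, e2] using this
  have hmeas : ∀ s : Fin n → ℝ, μ {y | ∀ i, s i + y i ∈ Set.Icc (a i) (b i)}
      = ENNReal.ofReal (∏ i, g i (s i)) := by
    intro s
    have hfin : ∀ i, IsFiniteMeasure
        ((volume : Measure ℝ).withDensity fun x => ENNReal.ofReal (f i x)) :=
      fun i => isFiniteMeasure_withDensity_ofReal (hf_int i).2
    have hset : {y : Fin n → ℝ | ∀ i, s i + y i ∈ Set.Icc (a i) (b i)}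
        = Set.pi Set.univ fun i => Set.Icc (a i - s i) (b i - s i) := by
      ext y
      simp only [Set.mem_ofPred_eq, Set.mem_pi, Set.mem_univ, true_imp_iff, Set.mem_Icc]
      refine forall_congr' fun i => ?_
      constructor <;> rintro ⟨h1, h2⟩ <;> constructor <;> linarith
    rw [hset, hμ, Measure.pi_pi, ENNReal.ofReal_prod_of_nonneg fun i _ => hg0 i _]
    refine Finset.prod_congr rfl fun i _ => ?_
    rw [withDensity_apply _ measurableSet_Icc, hgw,
      intervalIntegral.integral_of_le (by linarith [hab i]), ← integral_Icc_eq_integral_Ioc,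
      ofReal_integral_eq_lintegral_ofReal (hf_int i).integrableOn
        (Filter.Eventually.of_forall fun x => hf_nonneg i x)]
  refine ⟨?_, ?_, hmeas smin⟩
  · intro s hs
    rw [hmeas]
    apply ENNReal.ofReal_le_ofReal
    refine Finset.prod_le_prod (fun i _ => hg0 i _) fun i _ => hgm i _ _ ?_
    obtain ⟨h1, h2⟩ := hs i
    have h3 := hsmin i
    rw [hsmax i] at h3
    have h4 := hr i
    rw [h3]
    split_ifs <;> grind
  · intro i
    have h4 := hr i
    rw [hsmin i]
    split_ifs <;> constructor <;> linarith
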